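/- Let α and β be two irrational vectors in ℝ^d and let T be an invertible linear map on ℝ^d. Then T(ℤα + ℤ^d) = ℤβ + ℤ^d if and only if the following holds: for every bounded measurable set S ⊆ ℝ^d (not necessarily Riemann measurable), S is a bounded remainder set with respect to α if and only if its image T(S) is a bounded remainder set with respect to β. -/

import Mathlib

open MeasureTheory

/-- The multiplicity function of the projection of `S ⊆ ℝ^d` to the torus `ℝ^d/ℤ^d`,
viewed as a `ℤ^d`-periodic function on `ℝ^d`. -/
noncomputable def multFn {d : ℕ} (S : Set (Fin d → ℝ)) (x : Fin d → ℝ) : ℝ :=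
  ∑' k : Fin d → ℤ, Set.indicator S (fun _ => (1 : ℝ)) (x + fun i => (k i : ℝ))

/-- The discrepancy `∑_{k=0}^{n-1} χ_S(x + k v) − n · Leb(S)`. -/
noncomputable def disc {d : ℕ} (v : Fin d → ℝ) (S : Set (Fin d → ℝ)) (n : ℕ)
    (x : Fin d → ℝ) : ℝ :=
  (∑ k ∈ Finset.range n, multFn S (x + (k : ℝ) • v)) - n * (volume S).toReal

/-- `S` is a bounded remainder set with respect to the vector `v`. -/
def IsBRS {d : ℕ} (v : Fin d → ℝ) (S : Set (Fin d → ℝ)) : Prop :=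
  ∃ C : ℝ, ∀ᵐ x : Fin d → ℝ, ∀ n : ℕ, 1 ≤ n → |disc v S n x| ≤ C

/-- `α ∈ ℝ^d` is an irrational vector: `1, α₁, …, α_d` are linearly independent over `ℚ`. -/
def IsIrrationalVector {d : ℕ} (α : Fin d → ℝ) : Prop :=
  ∀ (n₀ : ℤ) (n : Fin d → ℤ), (n₀ : ℝ) + ∑ i, (n i : ℝ) * α i = 0 → n₀ = 0 ∧ n = 0

/-- The subgroup `ℤα + ℤ^d` of `ℝ^d`. -/
def lat {d : ℕ} (α : Fin d → ℝ) : Set (Fin d → ℝ) :=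
  {v | ∃ (q : ℤ) (p : Fin d → ℤ), v = (q : ℝ) • α + fun i => (p i : ℝ)}

/-- The parallelepiped spanned by the vectors `v 1, …, v d`. -/
def paral {d : ℕ} (v : Fin d → Fin d → ℝ) : Set (Fin d → ℝ) :=
  {x | ∃ t : Fin d → ℝ, (∀ k, 0 ≤ t k ∧ t k < 1) ∧ x = ∑ k, t k • v k}

/-- A `ℤ^d`-periodic function on `ℝ^d`, i.e. a function on the torus. -/
def IsZdPeriodic {d : ℕ} (g : (Fin d → ℝ) → ℝ) : Prop :=
  ∀ (x : Fin d → ℝ) (k : Fin d → ℤ), g (x + fun i => (k i : ℝ)) = g x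

/-- `g` is a transfer function for `S` with respect to `v`:
a function on the torus with `χ_S(x) − Leb S = g(x) − g(x−v)` a.e. -/
def IsTransfer {d : ℕ} (v : Fin d → ℝ) (S : Set (Fin d → ℝ)) (g : (Fin d → ℝ) → ℝ) : Prop :=
  IsZdPeriodic g ∧
    ∀ᵐ x : Fin d → ℝ, multFn S x - (volume S).toReal = g x - g (x - v)

/-- A bounded function whose set of discontinuity points is Lebesgue-null. -/
def RiemannIntegrableFn {d : ℕ} (g : (Fin d → ℝ) → ℝ) : Prop :=
  (∃ M : ℝ, ∀ x, |g x| ≤ M) ∧ volume {x | ¬ ContinuousAt g x} = 0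

/-- A bounded set is Riemann measurable if its boundary is Lebesgue-null. -/
def IsRiemannMeasurable {d : ℕ} (S : Set (Fin d → ℝ)) : Prop :=
  Bornology.IsBounded S ∧ volume (frontier S) = 0

/-- `S` and `S'` are equidecomposable, with pieces satisfying the predicate `P`,
using translations by vectors in `Γ`. -/
def EquidecompBy {d : ℕ} (P : Set (Fin d → ℝ) → Prop)
    (S S' : Set (Fin d → ℝ)) (Γ : Set (Fin d → ℝ)) : Prop :=
  ∃ (N : ℕ) (A : Fin N → Set (Fin d → ℝ)) (γ : Fin N → Fin d → ℝ),
    (∀ i, P (A i)) ∧ (∀ i, γ i ∈ Γ) ∧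
    (∀ i j, i ≠ j → volume (A i ∩ A j) = 0) ∧
    volume (symmDiff S (⋃ i, A i)) = 0 ∧
    (∀ i j, i ≠ j → volume (((fun x => x + γ i) '' A i) ∩ ((fun x => x + γ j) '' A j)) = 0) ∧
    volume (symmDiff S' (⋃ i, (fun x => x + γ i) '' A i)) = 0

/-- A set is centrally symmetric if it equals its reflection about some point `c`. -/
def IsCentrallySymmetric {d : ℕ} (A : Set (Fin d → ℝ)) : Prop :=
  ∃ c : Fin d → ℝ, ∀ x, x ∈ A ↔ (2 : ℝ) • c - x ∈ A


/-!
Write `Γ_v = ℤv + ℤ^d`. The discrepancy of a bounded set `S` counts the vectors `γ = qv + p` of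
`Γ_v` with `0 ≤ q < n` and `x + γ ∈ S`.

If `T Γ_α = Γ_β`, then `T` transports the orbit `x + Γ_α` to `Tx + Γ_β`, and the coefficient `q'`
of `β` in `T(qα + p)` is `c q + ℓ(γ)` with `c ≠ 0` and `ℓ` a linear form on `ℝ^d`
(`exists_coord_change`). Since `ℓ` is bounded on the relevant vectors, the condition `0 ≤ q' < n`
agrees with an interval condition on `q`, of length `n / |c|`, up to bounded errors at both ends.
Hence bounded discrepancy of `S` passes to `T(S)` (`isBRS_image`), where the density is
automatically the Lebesgue measure, by integrating over the torus (`isBRS_of_density`).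

Conversely, let `γ ∈ Γ_α` be such that the unit cube `Q` and `Q + γ` are disjoint. For each
`R ⊆ Q` the set `(Q \ R) ∪ (R + γ)` has bounded remainder for `α`, because its discrepancy
telescopes (`isBRS_swapSet`). So by assumption its image, and that of `Q`, have bounded remainder
for `β`, and therefore the ergodic sums of `χ_A - χ_{A + Tγ}` are bounded for every measurable
`A ⊆ T(Q)`. If `Tγ ∉ Γ_β`, then inside any open set there is an `A` with arbitrarily large sums:
take tiny balls around returns of an orbit (`exists_large_shiftDisc`). Choosing such sets in
disjoint open boxes contradicts a Baire category argument on `{0,1}^ℕ` (`uniform_bound`). Every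
vector of `Γ_α` is a difference of two such `γ`, so `T Γ_α ⊆ Γ_β`, and the reverse inclusion
follows by applying this to `T⁻¹`.
-/

/-! ### Multiplicity functions, integration over the torus, and the group `ℤv + ℤ^d` -/

/-- The vector of `ℝ^d` with integer coordinates `p`. -/
def zvec {d : ℕ} (p : Fin d → ℤ) : Fin d → ℝ := fun i => (p i : ℝ)

lemma zvec_add {d : ℕ} (p q : Fin d → ℤ) : zvec (p + q) = zvec p + zvec q := by
  ext i; simp [zvec]

lemma zvec_neg {d : ℕ} (p : Fin d → ℤ) : zvec (-p) = -zvec p := by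
  ext i; simp [zvec]

lemma zvec_sub {d : ℕ} (p q : Fin d → ℤ) : zvec (p - q) = zvec p - zvec q := by
  ext i; simp [zvec]

lemma zvec_injective {d : ℕ} : Function.Injective (zvec (d := d)) := by
  intro p q h
  ext i
  have := congrFun h i
  simpa [zvec] using this

/-- The half-open unit cube `[0,1)^d`. -/
def unitCube (d : ℕ) : Set (Fin d → ℝ) := Set.pi Set.univ fun _ => Set.Ico 0 1

lemma unitCube_measurable (d : ℕ) : MeasurableSet (unitCube d) :=
  MeasurableSet.univ_pi fun _ => measurableSet_Ico

lemma unitCube_bounded (d : ℕ) : Bornology.IsBounded (unitCube d) :=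
  Bornology.IsBounded.pi fun _ => Metric.isBounded_Ico 0 1

lemma volume_unitCube (d : ℕ) : volume (unitCube d) = 1 := by
  simp [unitCube, Real.volume_pi_Ico]

lemma exists_add_zvec_mem_unitCube {d : ℕ} (y : Fin d → ℝ) :
    ∃ p : Fin d → ℤ, y + zvec p ∈ unitCube d := by
  refine ⟨fun i => -⌊y i⌋, fun i _ => ?_⟩
  have h1 := Int.floor_le (y i)
  have h2 := Int.lt_floor_add_one (y i)
  simp only [zvec, Pi.add_apply, Int.cast_neg, Set.mem_Ico]
  constructor <;> linarith

lemma unitCube_unique {d : ℕ} {y : Fin d → ℝ} {p q : Fin d → ℤ}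
    (hp : y + zvec p ∈ unitCube d) (hq : y + zvec q ∈ unitCube d) : p = q := by
  ext i
  have h1 := hp i trivial
  have h2 := hq i trivial
  simp only [zvec, Pi.add_apply, Set.mem_Ico] at h1 h2
  have h3 : ((p i - q i : ℤ) : ℝ) < 1 := by push_cast; linarith
  have h4 : ((q i - p i : ℤ) : ℝ) < 1 := by push_cast; linarith
  have h5 : p i - q i < 1 := by exact_mod_cast h3
  have h6 : q i - p i < 1 := by exact_mod_cast h4
  omega

lemma finite_pts {d : ℕ} {S : Set (Fin d → ℝ)} (hS : Bornology.IsBounded S) (y : Fin d → ℝ) :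
    {p : Fin d → ℤ | y + zvec p ∈ S}.Finite := by
  obtain ⟨R, hR⟩ := hS.exists_norm_le
  obtain ⟨M, hM⟩ := exists_nat_gt (R + ‖y‖)
  refine (Set.finite_Icc (fun _ : Fin d => -(M : ℤ)) (fun _ => (M : ℤ))).subset fun p hp => ?_
  have key : ∀ i, |(p i : ℝ)| < M := fun i => by
    have h1 : ‖zvec p‖ ≤ R + ‖y‖ := by
      calc ‖zvec p‖ = ‖(y + zvec p) - y‖ := by rw [add_sub_cancel_left]
        _ ≤ _ := (norm_sub_le _ _).trans (by gcongr; exact hR _ hp)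
    have h2 := norm_le_pi_norm (zvec p) i
    simp only [zvec, Real.norm_eq_abs] at h2
    exact lt_of_le_of_lt (h2.trans h1) hM
  constructor <;> intro i <;> have h := abs_lt.1 (key i)
  · have : -(M : ℤ) < p i := by exact_mod_cast h.1
    exact this.le
  · have : p i < (M : ℤ) := by exact_mod_cast h.2
    exact this.le

lemma multFn_eq_sum {d : ℕ} {S : Set (Fin d → ℝ)} {y : Fin d → ℝ} (F : Finset (Fin d → ℤ))
    (hF : ∀ p, y + zvec p ∈ S → p ∈ F) :
    multFn S y = ∑ p ∈ F, S.indicator (fun _ => (1 : ℝ)) (y + zvec p) := by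
  refine tsum_eq_sum fun p hp => ?_
  exact Set.indicator_of_notMem (fun h => hp (hF p h)) _

lemma multFn_eq_ncard {d : ℕ} {S : Set (Fin d → ℝ)} (hS : Bornology.IsBounded S)
    (y : Fin d → ℝ) : multFn S y = ({p : Fin d → ℤ | y + zvec p ∈ S}.ncard : ℝ) := by
  have hf := finite_pts hS y
  rw [multFn_eq_sum hf.toFinset (by simp), Set.ncard_eq_toFinset_card _ hf, Finset.card_eq_sum_ones,
    Nat.cast_sum]
  refine Finset.sum_congr rfl fun p hp => ?_
  rw [Set.indicator_of_mem (by simpa using hp)]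
  simp

lemma multFn_nonneg {d : ℕ} (S : Set (Fin d → ℝ)) (y : Fin d → ℝ) : 0 ≤ multFn S y :=
  tsum_nonneg fun _ => Set.indicator_nonneg (fun _ _ => zero_le_one) _

lemma multFn_add_zvec {d : ℕ} (S : Set (Fin d → ℝ)) (y : Fin d → ℝ) (p : Fin d → ℤ) :
    multFn S (y + zvec p) = multFn S y := by
  unfold multFn
  rw [← (Equiv.addLeft p).tsum_eq (fun k => Set.indicator S (fun _ => (1 : ℝ)) (y + fun i => (k i : ℝ)))]
  refine tsum_congr fun k => ?_
  congr 1
  ext i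
  simp [zvec]
  ring

lemma multFn_union {d : ℕ} {S S' : Set (Fin d → ℝ)} (hS : Bornology.IsBounded S)
    (hS' : Bornology.IsBounded S') (h : Disjoint S S') (y : Fin d → ℝ) :
    multFn (S ∪ S') y = multFn S y + multFn S' y := by
  rw [multFn_eq_ncard hS, multFn_eq_ncard hS', multFn_eq_ncard (hS.union hS'), ← Nat.cast_add,
    ← Set.ncard_union_eq _ (finite_pts hS y) (finite_pts hS' y)]
  · rfl
  · exact Set.disjoint_left.2 fun p hp hp' => Set.disjoint_left.1 h hp hp'

lemma multFn_unitCube {d : ℕ} (y : Fin d → ℝ) : multFn (unitCube d) y = 1 := by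
  rw [multFn_eq_ncard (unitCube_bounded d)]
  obtain ⟨p, hp⟩ := exists_add_zvec_mem_unitCube y
  have : {p : Fin d → ℤ | y + zvec p ∈ unitCube d} = {p} := by
    ext q
    exact ⟨fun hq => unitCube_unique hq hp, fun hq => by rw [Set.mem_singleton_iff.1 hq]; exact hp⟩
  rw [this]; simp

lemma multFn_diff_unitCube {d : ℕ} {S : Set (Fin d → ℝ)} (hS : S ⊆ unitCube d) (y : Fin d → ℝ) :
    multFn (unitCube d \ S) y = 1 - multFn S y := by
  have h := multFn_union ((unitCube_bounded d).subset Set.sdiff_subset)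
    ((unitCube_bounded d).subset hS) Set.disjoint_sdiff_left y
  rw [Set.sdiff_union_of_subset hS, multFn_unitCube] at h
  linarith

lemma multFn_le_one {d : ℕ} {S : Set (Fin d → ℝ)} (hS : S ⊆ unitCube d) (y : Fin d → ℝ) :
    multFn S y ≤ 1 := by
  have := multFn_diff_unitCube hS y
  have := multFn_nonneg (unitCube d \ S) y
  linarith

/-- The translate `S + γ`, written as the preimage of `S` under `x ↦ x - γ`. -/
def shiftSet {d : ℕ} (S : Set (Fin d → ℝ)) (γ : Fin d → ℝ) : Set (Fin d → ℝ) :=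
  (fun x => x - γ) ⁻¹' S

lemma multFn_shiftSet {d : ℕ} (S : Set (Fin d → ℝ)) (γ y : Fin d → ℝ) :
    multFn (shiftSet S γ) y = multFn S (y - γ) := by
  unfold multFn
  refine tsum_congr fun k => ?_
  have : (y + fun i => (k i : ℝ)) - γ = y - γ + fun i => (k i : ℝ) := by abel
  rw [← this]
  rfl

lemma shiftSet_bounded {d : ℕ} {S : Set (Fin d → ℝ)} (hS : Bornology.IsBounded S)
    (γ : Fin d → ℝ) : Bornology.IsBounded (shiftSet S γ) := by
  obtain ⟨R, hR⟩ := hS.exists_norm_le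
  refine (Metric.isBounded_closedBall (x := (0 : Fin d → ℝ)) (r := R + ‖γ‖)).subset fun x hx => ?_
  rw [mem_closedBall_zero_iff]
  calc ‖x‖ = ‖(x - γ) + γ‖ := by rw [sub_add_cancel]
    _ ≤ _ := (norm_add_le _ _).trans (by gcongr; exact hR _ hx)

lemma shiftSet_measurable {d : ℕ} {S : Set (Fin d → ℝ)} (hS : MeasurableSet S)
    (γ : Fin d → ℝ) : MeasurableSet (shiftSet S γ) :=
  hS.preimage (measurable_id.sub_const γ)

lemma volume_shiftSet {d : ℕ} (S : Set (Fin d → ℝ)) (γ : Fin d → ℝ) :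
    volume (shiftSet S γ) = volume S := by
  unfold shiftSet
  simp_rw [sub_eq_add_neg]
  exact measure_preimage_add_right volume (-γ) S

/-- Unfolding: the integral of a periodization over a unit cube is the measure of the set. -/
lemma integral_multFn {d : ℕ} {S : Set (Fin d → ℝ)} (hS : Bornology.IsBounded S)
    (hm : MeasurableSet S) (w : Fin d → ℝ) :
    IntegrableOn (fun y => multFn S (y + w)) (unitCube d) ∧
      ∫ y in unitCube d, multFn S (y + w) = (volume S).toReal := by
  classical
  -- only finitely many integer translates of `S - w` meet the unit cube
  have hfin : {p : Fin d → ℤ | ∃ y ∈ unitCube d, y + w + zvec p ∈ S}.Finite := by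
    obtain ⟨R, hR⟩ := (unitCube_bounded d).exists_norm_le
    obtain ⟨R', hR'⟩ := hS.exists_norm_le
    refine (finite_pts (S := Metric.closedBall 0 (R + R')) Metric.isBounded_closedBall w).subset ?_
    rintro p ⟨y, hy, h⟩
    rw [Set.mem_ofPred_eq, mem_closedBall_zero_iff]
    calc ‖w + zvec p‖ = ‖(y + w + zvec p) - y‖ := by congr 1; abel
      _ ≤ R' + R := (norm_sub_le _ _).trans (add_le_add (hR' _ h) (hR _ hy))
      _ = _ := add_comm _ _
  set F := hfin.toFinset with hF
  have hsum : ∀ y ∈ unitCube d, multFn S (y + w) =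
      ∑ p ∈ F, S.indicator (fun _ => (1 : ℝ)) (y + w + zvec p) := fun y hy =>
    multFn_eq_sum F fun p hp => by rw [hF, Set.Finite.mem_toFinset]; exact ⟨y, hy, hp⟩
  set A : (Fin d → ℤ) → Set (Fin d → ℝ) := fun p => shiftSet S (-(w + zvec p)) with hA
  have hAm : ∀ p, MeasurableSet (A p) := fun p => shiftSet_measurable hm _
  have hind : ∀ p y, S.indicator (fun _ => (1 : ℝ)) (y + w + zvec p) =
      (A p).indicator (fun _ => (1 : ℝ)) y := fun p y => by
    have : y - -(w + zvec p) = y + w + zvec p := by abel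
    simp only [Set.indicator, hA, shiftSet, Set.mem_preimage, this]
  have hint : ∀ p ∈ F, Integrable ((A p).indicator fun _ => (1 : ℝ))
      (volume.restrict (unitCube d)) := fun p _ => by
    refine IntegrableOn.integrable_indicator ?_ (hAm p)
    have : IsFiniteMeasure (volume.restrict (unitCube d)) :=
      ⟨by rw [Measure.restrict_apply_univ, volume_unitCube]; exact ENNReal.one_lt_top⟩
    exact (integrable_const (1 : ℝ)).integrableOn
  have hsum' : Set.EqOn (fun y => multFn S (y + w))
      (fun y => ∑ p ∈ F, (A p).indicator (fun _ => (1 : ℝ)) y) (unitCube d) := fun y hy => by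
    simp only [hsum y hy, hind]
  refine ⟨(integrableOn_congr_fun hsum' (unitCube_measurable d)).2
    (integrable_finsetSum _ hint), ?_⟩
  rw [setIntegral_congr_fun (unitCube_measurable d) hsum', integral_finsetSum _ hint]
  have h1 : ∀ p ∈ F, ∫ y in unitCube d, (A p).indicator (fun _ => (1 : ℝ)) y =
      volume.real (S ∩ shiftSet (unitCube d) (w + zvec p)) := fun p _ => by
    rw [integral_indicator_const _ (hAm p), smul_eq_mul, mul_one, measureReal_restrict_apply (hAm p),
      Measure.real, Measure.real, ← volume_shiftSet (S ∩ _) (-(w + zvec p))]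
    congr 2
    ext y
    have e : y - -(w + zvec p) - (w + zvec p) = y := by abel
    simp only [hA, shiftSet, Set.mem_inter_iff, Set.mem_preimage, e]
  have hne : ∀ p ∈ F, volume (S ∩ shiftSet (unitCube d) (w + zvec p)) ≠ ⊤ := fun p _ =>
    ((hS.subset Set.inter_subset_left).measure_lt_top).ne
  rw [Finset.sum_congr rfl h1, ← measureReal_biUnion_finset (h := hne)]
  · rw [Measure.real]
    congr 2
    ext y
    simp only [Set.mem_iUnion, Set.mem_inter_iff, exists_prop]
    refine ⟨fun ⟨p, _, h, _⟩ => h, fun h => ?_⟩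
    obtain ⟨p, hp⟩ := exists_add_zvec_mem_unitCube (y - w)
    have hp' : y - (w + zvec (-p)) ∈ unitCube d := by
      rw [zvec_neg]; convert hp using 1; abel
    refine ⟨-p, ?_, h, hp'⟩
    rw [hF, Set.Finite.mem_toFinset]
    exact ⟨_, hp', by convert h using 1; abel⟩
  · intro p _ q _ hpq
    refine Set.disjoint_left.2 fun y hy hy' => hpq ?_
    have e : ∀ p : Fin d → ℤ, y - (w + zvec p) = (y - w) + zvec (-p) := fun p => by
      rw [zvec_neg]; abel
    have h1 := hy.2
    have h2 := hy'.2
    simp only [shiftSet, Set.mem_preimage, e] at h1 h2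
    exact neg_injective (unitCube_unique h1 h2)
  · intro p _
    exact hm.inter (shiftSet_measurable (unitCube_measurable d) _)

/-- If the counting function of `S` stays within bounded distance of `n * a`, then necessarily
`a = Leb S`, so that `S` is a bounded remainder set. -/
lemma isBRS_of_density {d : ℕ} {v : Fin d → ℝ} {S : Set (Fin d → ℝ)} (hS : Bornology.IsBounded S)
    (hm : MeasurableSet S) (a C : ℝ)
    (h : ∀ᵐ y : Fin d → ℝ, ∀ n : ℕ, 1 ≤ n →
      |(∑ k ∈ Finset.range n, multFn S (y + (k : ℝ) • v)) - n * a| ≤ C) : IsBRS v S := by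
  have : IsProbabilityMeasure (volume.restrict (unitCube d)) :=
    ⟨by rw [Measure.restrict_apply_univ, volume_unitCube]⟩
  have hn : ∀ n : ℕ, 1 ≤ n → |n * ((volume S).toReal - a)| ≤ C := by
    intro n hn
    have hi : ∀ k ∈ Finset.range n, Integrable (fun y => multFn S (y + (k : ℝ) • v))
        (volume.restrict (unitCube d)) := fun k _ => (integral_multFn hS hm _).1
    have e : ∫ y in unitCube d, ((∑ k ∈ Finset.range n, multFn S (y + (k : ℝ) • v)) - n * a) =
        n * ((volume S).toReal - a) := by
      rw [integral_sub (integrable_finsetSum _ hi) (integrable_const _), integral_finsetSum _ hi,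
        Finset.sum_congr rfl fun k _ => (integral_multFn hS hm _).2]
      simp
      ring
    rw [← e, ← Real.norm_eq_abs]
    refine (norm_integral_le_of_norm_le_const (C := C) ?_).trans (by simp)
    refine ae_restrict_of_ae ?_
    filter_upwards [h] with y hy
    exact hy n hn
  have ha : (volume S).toReal = a := by
    by_contra hne
    have hpos : 0 < |(volume S).toReal - a| := abs_pos.2 (sub_ne_zero.2 hne)
    obtain ⟨n, hn1⟩ := exists_nat_gt (C / |(volume S).toReal - a|)
    have h1 := hn (n + 1) (by omega)
    rw [div_lt_iff₀ hpos] at hn1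
    rw [abs_mul, Nat.abs_cast] at h1
    push_cast at h1
    nlinarith
  refine ⟨C, ?_⟩
  filter_upwards [h] with y hy n hn
  rw [disc, ha]
  exact hy n hn

lemma linearEquiv_continuous {d : ℕ} (T : (Fin d → ℝ) ≃ₗ[ℝ] (Fin d → ℝ)) : Continuous T :=
  LinearMap.continuous_of_finiteDimensional (T : (Fin d → ℝ) →ₗ[ℝ] (Fin d → ℝ))

lemma image_eq_preimage_symm' {d : ℕ} (T : (Fin d → ℝ) ≃ₗ[ℝ] (Fin d → ℝ))
    (S : Set (Fin d → ℝ)) : T '' S = T.symm ⁻¹' S := T.image_eq_preimage_symm S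

lemma image_measurable {d : ℕ} (T : (Fin d → ℝ) ≃ₗ[ℝ] (Fin d → ℝ)) {S : Set (Fin d → ℝ)}
    (hS : MeasurableSet S) : MeasurableSet (T '' S) := by
  rw [image_eq_preimage_symm']
  exact hS.preimage (linearEquiv_continuous T.symm).measurable

lemma image_bounded {d : ℕ} (T : (Fin d → ℝ) ≃ₗ[ℝ] (Fin d → ℝ)) {S : Set (Fin d → ℝ)}
    (hS : Bornology.IsBounded S) : Bornology.IsBounded (T '' S) :=
  (hS.isCompact_closure.image (linearEquiv_continuous T)).isBounded.subset
    (Set.image_mono subset_closure)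

lemma ae_comp_linearEquiv {d : ℕ} (T : (Fin d → ℝ) ≃ₗ[ℝ] (Fin d → ℝ)) {P : (Fin d → ℝ) → Prop}
    (h : ∀ᵐ x, P x) : ∀ᵐ y, P (T y) := by
  rw [ae_iff] at h ⊢
  have hd : LinearMap.det (T : (Fin d → ℝ) →ₗ[ℝ] (Fin d → ℝ)) ≠ 0 := T.isUnit_det'.ne_zero
  have := Measure.addHaar_preimage_linearMap (volume : Measure (Fin d → ℝ)) hd {x | ¬ P x}
  rw [h, mul_zero] at this
  exact this

lemma ae_comp_add {d : ℕ} (w : Fin d → ℝ) {P : (Fin d → ℝ) → Prop}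
    (h : ∀ᵐ x, P x) : ∀ᵐ y, P (y + w) := by
  rw [ae_iff] at h ⊢
  rw [← h]
  exact measure_preimage_add_right volume w {x | ¬ P x}

lemma mem_lat {d : ℕ} {v γ : Fin d → ℝ} :
    γ ∈ lat v ↔ ∃ (q : ℤ) (p : Fin d → ℤ), γ = (q : ℝ) • v + zvec p := Iff.rfl

lemma lat_sub {d : ℕ} {v γ γ' : Fin d → ℝ} (h : γ ∈ lat v) (h' : γ' ∈ lat v) :
    γ - γ' ∈ lat v := by
  obtain ⟨q, p, rfl⟩ := h
  obtain ⟨q', p', rfl⟩ := h'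
  refine mem_lat.2 ⟨q - q', p - p', ?_⟩
  rw [zvec_sub]; push_cast; change _ • v + zvec p - (_ • v + zvec p') = _
  module

lemma lat_coord_unique {d : ℕ} (hd : 1 ≤ d) {v : Fin d → ℝ} (hv : IsIrrationalVector v)
    {q q' : ℤ} {p p' : Fin d → ℤ} (h : (q : ℝ) • v + zvec p = (q' : ℝ) • v + zvec p') :
    q = q' := by
  have h0 := congrFun h ⟨0, hd⟩
  simp only [zvec, Pi.add_apply, Pi.smul_apply, smul_eq_mul] at h0
  have := (hv (p ⟨0, hd⟩ - p' ⟨0, hd⟩) (Pi.single ⟨0, hd⟩ (q - q')) (by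
    rw [Finset.sum_eq_single ⟨0, hd⟩ (fun i _ hi => by simp [Pi.single_eq_of_ne hi]) (by simp)]
    simp; linarith)).2
  have := congrFun this ⟨0, hd⟩
  simp at this
  omega

/-! ### Counting visits and the change of coordinates -/

/-- The vectors `γ = q v + p` of `ℤv + ℤ^d` with `a ≤ q < b` that carry `x` into `S`. -/
def visits {d : ℕ} (v x : Fin d → ℝ) (S : Set (Fin d → ℝ)) (a b : ℤ) : Set (Fin d → ℝ) :=
  {γ | x + γ ∈ S ∧ ∃ (q : ℤ) (p : Fin d → ℤ), a ≤ q ∧ q < b ∧ γ = (q : ℝ) • v + zvec p}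

lemma visits_empty {d : ℕ} (v x : Fin d → ℝ) (S : Set (Fin d → ℝ)) (a : ℤ) :
    visits v x S a a = ∅ := by
  ext γ
  simp only [visits, Set.mem_ofPred_eq, Set.mem_empty_iff_false, iff_false]
  rintro ⟨_, q, _, h1, h2, _⟩
  omega

lemma visits_succ {d : ℕ} (v x : Fin d → ℝ) (S : Set (Fin d → ℝ)) {a b : ℤ} (hab : a ≤ b) :
    visits v x S a (b + 1) = visits v x S a b ∪
      (fun p => (b : ℝ) • v + zvec p) '' {p | (x + (b : ℝ) • v) + zvec p ∈ S} := by
  ext γ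
  constructor
  · rintro ⟨hS, q, p, h1, h2, rfl⟩
    rcases (show q ≤ b by omega).lt_or_eq with h | rfl
    · exact Or.inl ⟨hS, q, p, h1, h, rfl⟩
    · exact Or.inr ⟨p, by simpa [add_assoc] using hS, rfl⟩
  · rintro (⟨hS, q, p, h1, h2, rfl⟩ | ⟨p, hp, rfl⟩)
    · exact ⟨hS, q, p, h1, by omega, rfl⟩
    · exact ⟨by simpa [add_assoc] using hp, b, p, hab, by omega, rfl⟩

/-- Irrationality of `v` makes the coefficient `q` of `q v + p` unique, so counting vectors of
`ℤv + ℤ^d` amounts to summing the multiplicity function along the orbit. -/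
lemma visits_finite_ncard {d : ℕ} (hd : 1 ≤ d) {v : Fin d → ℝ} (hv : IsIrrationalVector v)
    {S : Set (Fin d → ℝ)} (hS : Bornology.IsBounded S) (x : Fin d → ℝ) (a : ℤ) (n : ℕ) :
    (visits v x S a (a + n)).Finite ∧ ((visits v x S a (a + n)).ncard : ℝ) =
      ∑ k ∈ Finset.range n, multFn S (x + (a : ℝ) • v + (k : ℝ) • v) := by
  induction n with
  | zero => simp [visits_empty]
  | succ n ih =>
    have e : a + ((n + 1 : ℕ) : ℤ) = (a + n) + 1 := by push_cast; ring
    rw [e, visits_succ v x S (by omega : a ≤ a + n)]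
    have hinj : Function.Injective fun p : Fin d → ℤ => ((a + n : ℤ) : ℝ) • v + zvec p :=
      fun p q h => zvec_injective (add_left_cancel h)
    have hf := (finite_pts hS (x + ((a + n : ℤ) : ℝ) • v)).image
      (fun p => ((a + n : ℤ) : ℝ) • v + zvec p)
    refine ⟨ih.1.union hf, ?_⟩
    rw [Set.ncard_union_eq _ ih.1 hf, Set.ncard_image_of_injective _ hinj, Finset.sum_range_succ,
      Nat.cast_add, ih.2, ← multFn_eq_ncard hS]
    · congr 2
      push_cast
      module
    · refine Set.disjoint_left.2 ?_
      rintro γ ⟨_, q, p, _, h2, rfl⟩ ⟨p', _, h⟩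
      have := lat_coord_unique hd hv h
      omega

lemma abs_sum_coord_le {d : ℕ} (m : Fin d → ℤ) (γ : Fin d → ℝ) {R : ℝ} (hγ : ‖γ‖ ≤ R) :
    |∑ i, (m i : ℝ) * γ i| ≤ (∑ i, |(m i : ℝ)|) * R := by
  rw [Finset.sum_mul]
  refine (Finset.abs_sum_le_sum_abs _ _).trans (Finset.sum_le_sum fun i _ => ?_)
  rw [abs_mul]
  gcongr
  exact (norm_le_pi_norm γ i).trans hγ

/-- The interval `[0,n)` divided by `c`: its endpoints `u`, `w`, in the order given by the sign of
`c`, satisfy `w - u = n / |c|`. -/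
lemma exists_div_interval {c : ℝ} (hc : c ≠ 0) (n : ℝ) :
    ∃ u w : ℝ, w - u = n / |c| ∧ (∀ t, 0 ≤ t → t < n → u ≤ t / c ∧ t / c ≤ w) ∧
      ∀ s, u < s → s < w → 0 < c * s ∧ c * s < n := by
  rcases lt_or_gt_of_ne hc with h | h
  · refine ⟨n / c, 0, by rw [abs_of_neg h, div_neg]; ring, fun t h0 h1 => ⟨?_, ?_⟩,
      fun s h1 h2 => ⟨by nlinarith, ?_⟩⟩
    · exact (div_le_div_right_of_neg h).2 h1.le
    · exact div_nonpos_of_nonneg_of_nonpos h0 h.le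
    · rw [div_lt_iff_of_neg h] at h1
      linarith
  · refine ⟨0, n / c, by rw [abs_of_pos h]; ring, fun t h0 h1 => ⟨by positivity, by gcongr⟩,
      fun s h1 h2 => ⟨by positivity, ?_⟩⟩
    rw [lt_div_iff₀ h] at h2
    linarith

/-- In the coordinates `(q, p)` of `qα + p`, a map `T` sending `ℤα + ℤ^d` to `ℤβ + ℤ^d` changes the
coordinate `q` into `c q + ℓ(γ)`, where `ℓ(γ) = ∑ mᵢ γᵢ` is a linear form on `ℝ^d`
and `c ≠ 0`. -/
lemma exists_coord_change {d : ℕ} (hd : 1 ≤ d) {α β : Fin d → ℝ} (hα : IsIrrationalVector α)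
    (hβ : IsIrrationalVector β) (T : (Fin d → ℝ) ≃ₗ[ℝ] (Fin d → ℝ)) (hT : T '' lat α = lat β) :
    ∃ (c : ℝ) (m : Fin d → ℤ), c ≠ 0 ∧ ∀ (q : ℤ) (p : Fin d → ℤ),
      ∃ (q' : ℤ) (p' : Fin d → ℤ), T ((q : ℝ) • α + zvec p) = (q' : ℝ) • β + zvec p' ∧
        (q' : ℝ) = c * q + ∑ i, (m i : ℝ) * ((q : ℝ) • α + zvec p) i := by
  have hmem : ∀ γ ∈ lat α, T γ ∈ lat β := fun γ h => hT ▸ Set.mem_image_of_mem T h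
  obtain ⟨m0, r0, h0⟩ := mem_lat.1 (hmem α (mem_lat.2 ⟨1, 0, by ext i; simp [zvec]⟩))
  have hi : ∀ i, ∃ (mi : ℤ) (ri : Fin d → ℤ),
      T (zvec (Pi.single i 1)) = (mi : ℝ) • β + zvec ri := fun i =>
    mem_lat.1 (hmem _ (mem_lat.2 ⟨0, Pi.single i 1, by simp⟩))
  choose m r hr using hi
  have hz : ∀ p : Fin d → ℤ, zvec p = ∑ i, (p i : ℝ) • zvec (Pi.single i 1) := fun p => by
    ext j
    simp [zvec, Finset.sum_apply, Pi.single_apply]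
  have hTq : ∀ (q : ℤ) (p : Fin d → ℤ), T ((q : ℝ) • α + zvec p) =
      ((m0 * q + ∑ i, m i * p i : ℤ) : ℝ) • β + zvec (fun j => q * r0 j + ∑ i, p i * r i j) := by
    intro q p
    rw [map_add, map_smul, h0, hz p, map_sum]
    simp_rw [map_smul, hr]
    ext j
    simp [zvec, Finset.sum_apply, Finset.sum_add_distrib, add_mul, Finset.sum_mul]
    simp only [mul_comm, mul_assoc]
    ring
  refine ⟨m0 - ∑ i, m i * α i, m, fun hc => ?_, fun q p => ⟨_, _, hTq q p, ?_⟩⟩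
  · -- otherwise `T` would map `ℤα + ℤ^d` into `ℤ^d`, which does not contain `β`
    have hh := hα m0 (-m) (by
      simp only [Pi.neg_apply, Int.cast_neg, neg_mul, Finset.sum_neg_distrib]; linarith)
    have hm : m = 0 := neg_eq_zero.1 hh.2
    have hβm : β ∈ lat β := mem_lat.2 ⟨1, 0, by ext i; simp [zvec]⟩
    rw [← hT] at hβm
    obtain ⟨γ, hγ, hγβ⟩ := hβm
    obtain ⟨q, p, rfl⟩ := mem_lat.1 hγ
    have h1 := hTq q p
    rw [hγβ, hh.1, hm] at h1
    have h2 : ((1 : ℤ) : ℝ) • β + zvec 0 = ((0 : ℤ) : ℝ) • β +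
        zvec (fun j => q * r0 j + ∑ i, p i * r i j) := by
      simp only [Pi.zero_apply, zero_mul, Finset.sum_const_zero, add_zero] at h1
      rw [← h1]
      ext i; simp [zvec]
    have := lat_coord_unique hd hβ h2
    omega
  · simp only [Pi.add_apply, Pi.smul_apply, smul_eq_mul, zvec, mul_add, Finset.sum_add_distrib]
    push_cast
    simp only [sub_mul, Finset.sum_mul]
    have : ∀ i, (m i : ℝ) * (q * α i) = m i * α i * q := fun i => by ring
    simp only [this]
    ring

/-- The first `n` visits of the `β`-orbit of `y` to `T(S)` are, through `T`, visits of the orbit of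
`x = T⁻¹ y` to `S` with `0 ≤ c q + ℓ(γ) < n`. As `ℓ(γ)` is bounded, this is an interval of
length `n / |c|` for `q` up to bounded errors at both ends. The count is thus within bounded
distance of `n Leb(S) / |c|`, and `isBRS_of_density` applies. -/
lemma isBRS_image {d : ℕ} (hd : 1 ≤ d) {α β : Fin d → ℝ} (hα : IsIrrationalVector α)
    (hβ : IsIrrationalVector β) (T : (Fin d → ℝ) ≃ₗ[ℝ] (Fin d → ℝ)) (hT : T '' lat α = lat β)
    {S : Set (Fin d → ℝ)} (hS : Bornology.IsBounded S) (hm : MeasurableSet S) (h : IsBRS α S) :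
    IsBRS β (T '' S) := by
  obtain ⟨C0, hC0⟩ := h
  set C := max C0 0
  have hC : ∀ᵐ x : Fin d → ℝ, ∀ n : ℕ, 1 ≤ n → |disc α S n x| ≤ C := by
    filter_upwards [hC0] with x hx n hn using (hx n hn).trans (le_max_left _ _)
  have hCnn : 0 ≤ C := le_max_right _ _
  obtain ⟨c, m, hc, hcoord⟩ := exists_coord_change hd hα hβ T hT
  set V := (volume S).toReal with hV
  have hVnn : 0 ≤ V := ENNReal.toReal_nonneg
  obtain ⟨R1, hR1pos, hR1⟩ := hS.exists_pos_norm_le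
  obtain ⟨R2, hR2pos, hR2⟩ := (image_bounded T.symm (unitCube_bounded d)).exists_pos_norm_le
  set L := ((∑ i, |(m i : ℝ)|) * (R1 + R2)) / |c| with hL
  refine isBRS_of_density (image_bounded T hS) (image_measurable T hm) (V / |c|)
    (C + V * (2 * L + 6)) ?_
  have hae : ∀ᵐ y : Fin d → ℝ, ∀ (p : Fin d → ℤ) (a : ℤ), ∀ n : ℕ, 1 ≤ n →
      |disc α S n (T.symm (y + zvec p) + (a : ℝ) • α)| ≤ C := by
    rw [ae_all_iff]; intro p
    rw [ae_all_iff]; intro a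
    exact ae_comp_add (zvec p) (ae_comp_linearEquiv T.symm (ae_comp_add ((a : ℝ) • α) hC))
  filter_upwards [hae] with y hy n hn
  -- reduce to `y` in the unit cube, so that all bounds below are uniform
  obtain ⟨p0, hp0⟩ := exists_add_zvec_mem_unitCube y
  set y0 := y + zvec p0 with hy0
  set x := T.symm y0 with hx
  have hxy : T x = y0 := by rw [hx, LinearEquiv.apply_symm_apply]
  have hcount : ∀ a b : ℤ, a ≤ b → (visits α x S a b).Finite ∧
      |((visits α x S a b).ncard : ℝ) - (b - a) * V| ≤ C := by
    intro a b hab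
    obtain ⟨k, rfl⟩ := Int.le.dest hab
    obtain ⟨h1, h2⟩ := visits_finite_ncard hd hα hS x a k
    refine ⟨h1, ?_⟩
    rcases Nat.eq_zero_or_pos k with rfl | hk
    · simpa [visits_empty] using hCnn
    · have := hy p0 a k hk
      rw [disc, ← h2] at this
      convert this using 3
      push_cast; ring
  obtain ⟨hBf, hBn⟩ := visits_finite_ncard hd hβ (image_bounded T hS) y0 0 n
  have hsum : ∑ k ∈ Finset.range n, multFn (T '' S) (y + (k : ℝ) • β) =
      ((visits β y0 (T '' S) 0 n).ncard : ℝ) := by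
    rw [zero_add] at hBn
    rw [hBn]
    refine Finset.sum_congr rfl fun k _ => ?_
    rw [← multFn_add_zvec (T '' S) (y + (k : ℝ) • β) p0]
    congr 1
    rw [hy0, Int.cast_zero]
    module
  rw [zero_add] at hBf
  rw [hsum]
  obtain ⟨u, w, huw, hu, hw⟩ := exists_div_interval hc n
  -- the linear form is bounded on the vectors that carry `x` into `S`
  have hl : ∀ γ, x + γ ∈ S → |(∑ i, (m i : ℝ) * γ i) / c| ≤ L := by
    intro γ hγ
    rw [abs_div, hL]
    gcongr
    refine abs_sum_coord_le m γ ?_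
    calc ‖γ‖ = ‖(x + γ) - x‖ := by rw [add_sub_cancel_left]
      _ ≤ R1 + R2 := (norm_sub_le _ _).trans (add_le_add (hR1 _ hγ)
          (hR2 _ (Set.mem_image_of_mem _ hp0)))
  have hTmem : ∀ γ, x + γ ∈ S ↔ y0 + T γ ∈ T '' S := by
    intro γ
    rw [← hxy, ← map_add, T.injective.mem_set_image]
  have hlow : ∀ a b : ℤ, u + L < a → (b : ℝ) ≤ w - L →
      T '' visits α x S a b ⊆ visits β y0 (T '' S) 0 n := by
    rintro a b ha hb _ ⟨γ, ⟨hγ, q, p, haq, hqb, rfl⟩, rfl⟩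
    refine ⟨(hTmem _).1 hγ, ?_⟩
    obtain ⟨q', p', h1, h2⟩ := hcoord q p
    have h3 := abs_le.1 (hl _ hγ)
    have h4 : (q' : ℝ) = c * (q + (∑ i, (m i : ℝ) * ((q : ℝ) • α + zvec p) i) / c) := by
      rw [h2]; field_simp
    have haq' : (a : ℝ) ≤ q := by exact_mod_cast haq
    have hqb' : (q : ℝ) + 1 ≤ b := by exact_mod_cast hqb
    have h5 := hw _ (by linarith : u < q + (∑ i, (m i : ℝ) * ((q : ℝ) • α + zvec p) i) / c)
      (by linarith)
    rw [← h4] at h5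
    exact ⟨q', p', by exact_mod_cast h5.1.le, by exact_mod_cast h5.2, h1⟩
  have hupp : ∀ a b : ℤ, (a : ℝ) ≤ u - L → w + L < b →
      visits β y0 (T '' S) 0 n ⊆ T '' visits α x S a b := by
    rintro a b ha hb _ ⟨hγ', q', p', h0, hn', rfl⟩
    have hlat : (q' : ℝ) • β + zvec p' ∈ T '' lat α := hT ▸ mem_lat.2 ⟨q', p', rfl⟩
    obtain ⟨γ, hγ, he⟩ := hlat
    obtain ⟨q, p, rfl⟩ := mem_lat.1 hγ
    refine ⟨_, ⟨(hTmem _).2 (he ▸ hγ'), q, p, ?_, ?_, rfl⟩, he⟩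
    all_goals
      obtain ⟨q1, p1, h1, h2⟩ := hcoord q p
      have hq1 : q' = q1 := lat_coord_unique hd hβ (he.symm.trans h1)
      subst hq1
      have h3 := abs_le.1 (hl _ ((hTmem _).2 (he ▸ hγ')))
      have h4 : (q' : ℝ) / c = q + (∑ i, (m i : ℝ) * ((q : ℝ) • α + zvec p) i) / c := by
        rw [h2]; field_simp
      have h5 := hu q' (by exact_mod_cast h0) (by exact_mod_cast hn')
    · have : (a : ℝ) ≤ q := by linarith
      exact_mod_cast this
    · have : (q : ℝ) < b := by linarith
      exact_mod_cast this
  have hLnn : 0 ≤ L := by positivity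
  have hnV : (n : ℝ) * (V / |c|) = (w - u) * V := by rw [huw]; ring
  rw [hnV, abs_le]
  constructor
  · set a : ℤ := ⌊u + L⌋ + 1 with ha
    set b : ℤ := ⌊w - L⌋ with hb
    have ha1 := Int.lt_floor_add_one (u + L)
    have ha2 := Int.floor_le (u + L)
    have hb1 := Int.lt_floor_add_one (w - L)
    have hb2 := Int.floor_le (w - L)
    have e : (a : ℝ) = ⌊u + L⌋ + 1 := by rw [ha]; push_cast; ring
    have hV1 : (w - u - 2 * L - 2) * V ≤ ((b : ℝ) - a) * V :=
      mul_le_mul_of_nonneg_right (by linarith) hVnn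
    rcases le_or_gt a b with hab | hab
    · have h1 := (abs_le.1 (hcount a b hab).2).1
      have h2 : ((visits α x S a b).ncard : ℝ) ≤ (visits β y0 (T '' S) 0 n).ncard := by
        rw [← Set.ncard_image_of_injective _ T.injective]
        exact_mod_cast Set.ncard_le_ncard (hlow a b (by rw [e]; exact ha1) hb2) hBf
      nlinarith
    · have h1 : (b : ℝ) - a ≤ 0 := by
        have : (b : ℝ) < a := by exact_mod_cast hab
        linarith
      have h2 : ((b : ℝ) - a) * V ≤ 0 := mul_nonpos_of_nonpos_of_nonneg h1 hVnn
      have h3 : (0 : ℝ) ≤ (visits β y0 (T '' S) 0 n).ncard := Nat.cast_nonneg _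
      nlinarith
  · set a : ℤ := ⌊u - L⌋ with ha
    set b : ℤ := ⌊w + L⌋ + 1 with hb
    have ha1 := Int.lt_floor_add_one (u - L)
    have ha2 := Int.floor_le (u - L)
    have hb1 := Int.lt_floor_add_one (w + L)
    have hb2 := Int.floor_le (w + L)
    have e : (b : ℝ) = ⌊w + L⌋ + 1 := by rw [hb]; push_cast; ring
    have hV1 : ((b : ℝ) - a) * V ≤ (w - u + 2 * L + 2) * V :=
      mul_le_mul_of_nonneg_right (by linarith) hVnn
    have hwu : 0 ≤ w - u := by rw [huw]; positivity
    have hab : a ≤ b := by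
      have : (a : ℝ) ≤ b := by rw [e]; linarith
      exact_mod_cast this
    have h1 := (abs_le.1 (hcount a b hab).2).2
    have h2 : ((visits β y0 (T '' S) 0 n).ncard : ℝ) ≤ (visits α x S a b).ncard := by
      rw [← Set.ncard_image_of_injective (visits α x S a b) T.injective]
      exact_mod_cast Set.ncard_le_ncard (hupp a b ha2 (by rw [e]; exact hb1))
        ((hcount a b hab).1.image _)
    nlinarith

/-! ### Uniform boundedness and translations outside the group -/

/-- The `n`-th ergodic sum of `χ_S - χ_{S+γ}` along the orbit of `x` under translation by `v`. -/
noncomputable def shiftDisc {d : ℕ} (v γ : Fin d → ℝ) (S : Set (Fin d → ℝ)) (n : ℕ)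
    (x : Fin d → ℝ) : ℝ :=
  ∑ k ∈ Finset.range n, (multFn S (x + (k : ℝ) • v) - multFn S (x - γ + (k : ℝ) • v))

/-- Recurrence of the translation by `v` on the torus, by compactness. -/
lemma exists_recurrence {d : ℕ} (v : Fin d → ℝ) {ε : ℝ} (hε : 0 < ε) :
    ∃ (q : ℕ → ℕ) (p : ℕ → Fin d → ℤ), StrictMono q ∧ ∀ i, ‖(q i : ℝ) • v + zvec (p i)‖ < ε := by
  choose f hf using fun k : ℕ => exists_add_zvec_mem_unitCube ((k : ℝ) • v)
  have hK := (unitCube_bounded d).isCompact_closure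
  obtain ⟨a, _, φ, hφ, hlim⟩ := hK.tendsto_subseq fun k => subset_closure (hf k)
  obtain ⟨M, hM⟩ := Metric.cauchySeq_iff'.1 hlim.cauchySeq ε hε
  refine ⟨fun i => φ (M + i) - φ M, fun i => f (φ (M + i)) - f (φ M), fun i j hij => ?_,
    fun i => ?_⟩
  · have h1 : φ (M + i) < φ (M + j) := hφ (by omega)
    have h2 : φ M ≤ φ (M + i) := hφ.monotone (by omega)
    change φ (M + i) - φ M < φ (M + j) - φ M
    omega
  · have h2 : φ M ≤ φ (M + i) := hφ.monotone (by omega)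
    have := hM (M + i) (by omega)
    rw [dist_eq_norm] at this
    have e : ((φ (M + i) - φ M : ℕ) : ℝ) • v + zvec (f (φ (M + i)) - f (φ M)) =
        ((φ (M + i) : ℝ) • v + zvec (f (φ (M + i)))) - ((φ M : ℝ) • v + zvec (f (φ M))) := by
      rw [zvec_sub, Nat.cast_sub h2]
      module
    rw [e]
    exact this

lemma isClosed_range_zvec (d : ℕ) : IsClosed (Set.range (zvec (d := d))) := by
  have : Set.range (zvec (d := d)) = Set.pi Set.univ fun _ => Set.range ((↑) : ℤ → ℝ) := by
    ext x
    constructor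
    · rintro ⟨p, rfl⟩ i _
      exact ⟨p i, rfl⟩
    · intro h
      choose p hp using fun i => h i trivial
      exact ⟨p, funext hp⟩
  rw [this]
  exact isClosed_set_pi fun _ _ => Int.isClosedEmbedding_coe_real.isClosed_range

/-- A point outside `ℤv + ℤ^d` has positive distance to the part of that group with bounded
coefficient of `v`. -/
lemma exists_separation {d : ℕ} {v γ : Fin d → ℝ} (hγ : γ ∉ lat v) (n : ℤ) :
    ∃ δ > 0, ∀ (k : ℤ) (p : Fin d → ℤ), |k| ≤ n → δ ≤ ‖γ - ((k : ℝ) • v + zvec p)‖ := by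
  have hcl : IsClosed (⋃ k ∈ Set.Icc (-n) n, (fun z => (k : ℝ) • v + z) '' Set.range (zvec (d := d))) :=
    (Set.finite_Icc (-n) n).isClosed_biUnion fun k _ =>
      (Homeomorph.addLeft ((k : ℝ) • v)).isClosedMap _ (isClosed_range_zvec d)
  have hmem : γ ∈ (⋃ k ∈ Set.Icc (-n) n,
      (fun z => (k : ℝ) • v + z) '' Set.range (zvec (d := d)))ᶜ := by
    intro h
    simp only [Set.mem_iUnion] at h
    obtain ⟨k, _, _, ⟨p, rfl⟩, rfl⟩ := h
    exact hγ (mem_lat.2 ⟨k, p, rfl⟩)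
  obtain ⟨δ, hδ, hball⟩ := Metric.isOpen_iff.1 hcl.isOpen_compl γ hmem
  refine ⟨δ, hδ, fun k p hk => ?_⟩
  by_contra! hlt
  refine hball (a := (k : ℝ) • v + zvec p) ?_ ?_
  · rwa [mem_ball_iff_norm, norm_sub_rev]
  · simp only [Set.mem_iUnion]
    exact ⟨k, abs_le.1 hk, _, ⟨p, rfl⟩, rfl⟩

/-- If `γ ∉ ℤv + ℤ^d`, the ergodic sums of `χ_S - χ_{S+γ}` can be made large with `S` inside any
given open set: `S` is a union of tiny balls around returns of an orbit, so small
that the orbit shifted by `γ` misses all of them. -/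
lemma exists_large_shiftDisc {d : ℕ} {v γ : Fin d → ℝ} (hγ : γ ∉ lat v) {W : Set (Fin d → ℝ)}
    (hW : IsOpen W) (hWne : W.Nonempty) (hWb : Bornology.IsBounded W) (N : ℕ) :
    ∃ S ⊆ W, MeasurableSet S ∧ ∃ n : ℕ, 1 ≤ n ∧ ∃ (w : Fin d → ℝ) (r : ℝ), 0 < r ∧
      ∀ x ∈ Metric.ball w r, (N : ℝ) ≤ shiftDisc v γ S n x := by
  obtain ⟨w, hw⟩ := hWne
  obtain ⟨ε, hε, hball⟩ := Metric.isOpen_iff.1 hW w hw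
  obtain ⟨q, p, hq, hqp⟩ := exists_recurrence v (half_pos hε)
  set n := q N + 1 with hn
  obtain ⟨δ, hδ, hsep⟩ := exists_separation hγ n
  set r := min (δ / 2) (ε / 2) with hr
  have hr0 : 0 < r := lt_min (half_pos hδ) (half_pos hε)
  have hrδ : r ≤ δ / 2 := min_le_left _ _
  have hrε : r ≤ ε / 2 := min_le_right _ _
  set S : Set (Fin d → ℝ) := ⋃ i ∈ Finset.range N,
    Metric.ball (w + ((q i : ℝ) • v + zvec (p i))) r with hS
  have hSW : S ⊆ W := by
    refine Set.iUnion₂_subset fun i _ => (Metric.ball_subset_ball' ?_).trans hball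
    rw [dist_eq_norm, add_sub_cancel_left]
    linarith [hqp i]
  have hSb := hWb.subset hSW
  refine ⟨S, hSW, (isOpen_biUnion fun i _ => Metric.isOpen_ball).measurableSet, n, by omega, w, r,
    hr0, fun x hx => ?_⟩
  rw [mem_ball_iff_norm] at hx
  have hz : ∀ k ∈ Finset.range n, multFn S (x - γ + (k : ℝ) • v) = 0 := by
    intro k hk
    rw [multFn_eq_sum ∅, Finset.sum_empty]
    intro p' hp'
    exfalso
    simp only [hS, Set.mem_iUnion, mem_ball_iff_norm] at hp'
    obtain ⟨i, hi, hlt⟩ := hp'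
    have hqi : q i < q N := hq (Finset.mem_range.1 hi)
    have hkn := Finset.mem_range.1 hk
    have h1 := hsep (k - q i) (p' - p i) (by rw [abs_le]; omega)
    have h2 : γ - (((k - q i : ℤ) : ℝ) • v + zvec (p' - p i)) =
        (x - w) - (x - γ + (k : ℝ) • v + zvec p' - (w + ((q i : ℝ) • v + zvec (p i)))) := by
      rw [zvec_sub]; push_cast; module
    rw [h2] at h1
    have := norm_sub_le (x - w) (x - γ + (k : ℝ) • v + zvec p' - (w + ((q i : ℝ) • v + zvec (p i))))
    linarith
  have hone : ∀ i ∈ Finset.range N, 1 ≤ multFn S (x + (q i : ℝ) • v) := by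
    intro i hi
    rw [multFn_eq_ncard hSb]
    have : 0 < {p' | x + (q i : ℝ) • v + zvec p' ∈ S}.ncard := by
      rw [Set.ncard_pos (finite_pts hSb _)]
      refine ⟨p i, ?_⟩
      simp only [hS, Set.mem_ofPred_eq, Set.mem_iUnion]
      refine ⟨i, hi, ?_⟩
      rw [mem_ball_iff_norm]
      convert hx using 2
      abel
    exact_mod_cast this
  unfold shiftDisc
  rw [Finset.sum_congr rfl fun k hk => by rw [hz k hk, sub_zero]]
  calc (N : ℝ) = ∑ i ∈ Finset.range N, 1 := by simp
    _ ≤ ∑ i ∈ Finset.range N, multFn S (x + (q i : ℝ) • v) := Finset.sum_le_sum hone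
    _ = ∑ k ∈ (Finset.range N).image q, multFn S (x + (k : ℝ) • v) :=
      (Finset.sum_image (f := fun k : ℕ => multFn S (x + (k : ℝ) • v)) hq.injective.injOn).symm
    _ ≤ _ := by
      refine Finset.sum_le_sum_of_subset_of_nonneg ?_ fun _ _ _ => multFn_nonneg _ _
      intro k hk
      obtain ⟨i, hi, rfl⟩ := Finset.mem_image.1 hk
      have : q i < q N := hq (Finset.mem_range.1 hi)
      exact Finset.mem_range.2 (by omega)

/-- The union of the sets `S j` over those `j` with `ω j = true`. -/
def selUnion {d : ℕ} (S : ℕ → Set (Fin d → ℝ)) (ω : ℕ → Bool) : Set (Fin d → ℝ) :=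
  {x | ∃ j, ω j = true ∧ x ∈ S j}

lemma selUnion_measurable {d : ℕ} {S : ℕ → Set (Fin d → ℝ)} (hm : ∀ j, MeasurableSet (S j))
    (ω : ℕ → Bool) : MeasurableSet (selUnion S ω) := by
  have : selUnion S ω = ⋃ j, ⋃ _ : ω j = true, S j := by
    ext x; simp [selUnion]
  rw [this]
  exact MeasurableSet.iUnion fun j => MeasurableSet.iUnion fun _ => hm j

lemma continuous_multFn_selUnion {d : ℕ} {S : ℕ → Set (Fin d → ℝ)} {U : Set (Fin d → ℝ)}
    (hU : Bornology.IsBounded U) (hSU : ∀ j, S j ⊆ U)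
    (hdisj : ∀ i j, i ≠ j → Disjoint (S i) (S j)) (y : Fin d → ℝ) :
    Continuous fun ω => multFn (selUnion S ω) y := by
  have hf := finite_pts hU y
  have h1 : ∀ ω, multFn (selUnion S ω) y =
      ∑ p ∈ hf.toFinset, (selUnion S ω).indicator (fun _ => (1 : ℝ)) (y + zvec p) := fun ω =>
    multFn_eq_sum _ fun p hp => by
      obtain ⟨j, _, hj⟩ := hp
      exact hf.mem_toFinset.2 (hSU j hj)
  simp_rw [h1]
  refine continuous_finsetSum _ fun p _ => ?_
  -- whether a given point is selected depends on a single coordinate of `ω`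
  by_cases hex : ∃ j, y + zvec p ∈ S j
  · obtain ⟨j, hj⟩ := hex
    have : (fun ω : ℕ → Bool => (selUnion S ω).indicator (fun _ => (1 : ℝ)) (y + zvec p)) =
        (fun b : Bool => if b then (1 : ℝ) else 0) ∘ fun ω => ω j := by
      ext ω
      have hiff : y + zvec p ∈ selUnion S ω ↔ ω j = true := by
        refine ⟨fun ⟨i, hi, hi'⟩ => ?_, fun h => ⟨j, h, hj⟩⟩
        by_cases hij : i = j
        · exact hij ▸ hi
        · exact absurd hj (Set.disjoint_left.1 (hdisj i j hij) hi')
      by_cases h : ω j = true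
      · simp [Set.indicator_of_mem (hiff.2 h), h]
      · rw [Set.indicator_of_notMem fun h' => h (hiff.1 h')]
        simp [h]
    rw [this]
    exact continuous_of_discreteTopology.comp (continuous_apply j)
  · have : (fun ω : ℕ → Bool => (selUnion S ω).indicator (fun _ => (1 : ℝ)) (y + zvec p)) =
        fun _ => 0 := by
      ext ω
      refine Set.indicator_of_notMem ?_ _
      rintro ⟨j, _, hj⟩
      exact hex ⟨j, hj⟩
    rw [this]
    exact continuous_const

/-- A uniform boundedness principle for sets: by Baire's theorem in `{0,1}^ℕ`, boundedness of the
ergodic sums for every subfamily union implies a uniform bound for all but finitely many of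
the sets. -/
lemma uniform_bound {d : ℕ} (v γ : Fin d → ℝ) {S : ℕ → Set (Fin d → ℝ)} {U : Set (Fin d → ℝ)}
    (hU : Bornology.IsBounded U) (hSU : ∀ j, S j ⊆ U)
    (hdisj : ∀ i j, i ≠ j → Disjoint (S i) (S j))
    (h : ∀ ω, ∃ C : ℝ, ∀ᵐ x : Fin d → ℝ, ∀ n : ℕ, 1 ≤ n → |shiftDisc v γ (selUnion S ω) n x| ≤ C) :
    ∃ C : ℝ, ∀ᶠ j in Filter.atTop, ∀ᵐ x : Fin d → ℝ, ∀ n : ℕ, 1 ≤ n →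
      |shiftDisc v γ (S j) n x| ≤ C := by
  set E : ℕ → Set (ℕ → Bool) := fun C =>
    {ω | ∀ᵐ x : Fin d → ℝ, ∀ n : ℕ, 1 ≤ n → |shiftDisc v γ (selUnion S ω) n x| ≤ C} with hE
  have hcont : ∀ n x, Continuous fun ω => shiftDisc v γ (selUnion S ω) n x := fun n x => by
    unfold shiftDisc
    exact continuous_finsetSum _ fun k _ => (continuous_multFn_selUnion hU hSU hdisj _).sub
      (continuous_multFn_selUnion hU hSU hdisj _)
  have hcl : ∀ C, IsClosed (E C) := by
    intro C
    refine IsSeqClosed.isClosed fun ωs ω hωs hlim => ?_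
    have hall : ∀ᵐ x : Fin d → ℝ, ∀ i, ∀ n : ℕ, 1 ≤ n →
        |shiftDisc v γ (selUnion S (ωs i)) n x| ≤ C := ae_all_iff.2 hωs
    change ∀ᵐ x : Fin d → ℝ, _
    filter_upwards [hall] with x hx n hn
    exact le_of_tendsto (((hcont n x).tendsto ω).comp hlim).abs
      (Filter.Eventually.of_forall fun i => hx i n hn)
  have huniv : ⋃ C, E C = Set.univ := by
    refine Set.eq_univ_of_forall fun ω => ?_
    obtain ⟨C, hC⟩ := h ω
    obtain ⟨M, hM⟩ := exists_nat_ge C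
    refine Set.mem_iUnion.2 ⟨M, ?_⟩
    change ∀ᵐ x : Fin d → ℝ, _
    filter_upwards [hC] with x hx n hn using (hx n hn).trans hM
  obtain ⟨C, ω, hω⟩ := nonempty_interior_of_iUnion_of_closed hcl huniv
  -- altering a single far coordinate of `ω` stays inside the interior of `E C`
  have hupd : ∀ b, ∀ᶠ j in Filter.atTop, Function.update ω j b ∈ E C := by
    intro b
    have ht : Filter.Tendsto (fun j => Function.update ω j b) Filter.atTop (nhds ω) := by
      refine tendsto_pi_nhds.2 fun i => tendsto_const_nhds.congr' ?_
      filter_upwards [Filter.eventually_gt_atTop i] with j hj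
      rw [Function.update_of_ne hj.ne]
    exact (ht.eventually (isOpen_interior.mem_nhds hω)).mono fun j hj => interior_subset hj
  refine ⟨C + C, ?_⟩
  filter_upwards [hupd true, hupd false] with j h1 h0
  have hbd : ∀ ω, Bornology.IsBounded (selUnion S ω) := fun ω =>
    hU.subset (by rintro x ⟨j, _, hx⟩; exact hSU j hx)
  have hun : selUnion S (Function.update ω j true) = selUnion S (Function.update ω j false) ∪ S j := by
    ext x
    constructor
    · rintro ⟨i, hi, hx⟩
      by_cases hij : i = j
      · exact Or.inr (hij ▸ hx)
      · rw [Function.update_of_ne hij] at hi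
        exact Or.inl ⟨i, by rwa [Function.update_of_ne hij], hx⟩
    · rintro (⟨i, hi, hx⟩ | hx)
      · by_cases hij : i = j
        · subst hij; simp at hi
        · rw [Function.update_of_ne hij] at hi
          exact ⟨i, by rwa [Function.update_of_ne hij], hx⟩
      · exact ⟨j, by simp, hx⟩
  have hdj : Disjoint (selUnion S (Function.update ω j false)) (S j) := by
    refine Set.disjoint_left.2 fun x hsel hx' => ?_
    obtain ⟨i, hi, hx⟩ := hsel
    by_cases hij : i = j
    · subst hij; simp at hi
    · exact Set.disjoint_left.1 (hdisj i j hij) hx hx'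
  have hadd := multFn_union (hbd (Function.update ω j false)) (hU.subset (hSU j)) hdj
  filter_upwards [h1, h0] with x hx1 hx0 n hn
  have e : shiftDisc v γ (S j) n x = shiftDisc v γ (selUnion S (Function.update ω j true)) n x -
      shiftDisc v γ (selUnion S (Function.update ω j false)) n x := by
    unfold shiftDisc
    rw [← Finset.sum_sub_distrib]
    refine Finset.sum_congr rfl fun k _ => ?_
    rw [hun, hadd, hadd]
    ring
  rw [e]
  exact (abs_sub _ _).trans (add_le_add (hx1 n hn) (hx0 n hn))

/-- A shift by `q` changes a sum of `n` consecutive values bounded by `1` by at most `2 |q|`. -/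
lemma abs_shift_sum_le {f : ℤ → ℝ} (hf : ∀ k, |f k| ≤ 1) (n : ℕ) (q : ℤ) :
    |∑ k ∈ Finset.range n, f (k + q) - ∑ k ∈ Finset.range n, f k| ≤ 2 * |(q : ℝ)| := by
  set F : ℤ → ℝ := fun q => ∑ k ∈ Finset.range n, f (k + q) with hF
  have hstep : ∀ q, |F (q + 1) - F q| ≤ 2 := by
    intro q
    have : F (q + 1) - F q = f (n + q) - f q := by
      simp only [hF, ← Finset.sum_sub_distrib]
      have := Finset.sum_range_sub (fun k : ℕ => f (k + q)) n
      simp only [Nat.cast_zero, zero_add] at this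
      rw [← this]
      refine Finset.sum_congr rfl fun k _ => ?_
      congr 2
      push_cast; ring
    rw [this]
    linarith [abs_sub (f (n + q)) (f q), hf (n + q), hf q]
  have hnat : ∀ (m : ℕ) (q : ℤ), |F (q + m) - F q| ≤ 2 * m := by
    intro m q
    induction m with
    | zero => simp
    | succ m ih =>
      have h1 := hstep (q + m)
      have h2 := abs_sub_le (F (q + m + 1)) (F (q + m)) (F q)
      push_cast
      rw [← add_assoc]
      linarith
  have h0 : ∑ k ∈ Finset.range n, f k = F 0 := by simp [hF]
  rw [h0]
  change |F q - F 0| ≤ _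
  obtain ⟨m, rfl | rfl⟩ := q.eq_nat_or_neg
  · simpa using hnat m 0
  · have := hnat m (-m)
    rw [neg_add_cancel, abs_sub_comm] at this
    simpa using this

lemma isBRS_unitCube {d : ℕ} (v : Fin d → ℝ) : IsBRS v (unitCube d) :=
  ⟨0, Filter.Eventually.of_forall fun x n _ => by
    simp [disc, multFn_unitCube, volume_unitCube]⟩

/-! ### Testing with modified unit cubes -/

/-- The unit cube with its part `R` replaced by the translate `R + γ`. -/
def swapSet {d : ℕ} (R : Set (Fin d → ℝ)) (γ : Fin d → ℝ) : Set (Fin d → ℝ) :=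
  (unitCube d \ R) ∪ shiftSet R γ

/-- A translation by a vector with a coordinate of absolute value at least `1` moves any part of the
half-open unit cube off the cube. -/
lemma swapSet_disjoint {d : ℕ} {R : Set (Fin d → ℝ)} {γ : Fin d → ℝ} (hR : R ⊆ unitCube d)
    (hγ : ∃ i, 1 ≤ |γ i|) : Disjoint (unitCube d \ R) (shiftSet R γ) := by
  refine Set.disjoint_left.2 fun x hx hx' => ?_
  obtain ⟨i, hi⟩ := hγ
  have h1 := hx.1 i trivial
  have h2 := hR hx' i trivial
  simp only [Pi.sub_apply, Set.mem_Ico] at h1 h2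
  have : |γ i| < 1 := abs_lt.2 ⟨by linarith, by linarith⟩
  linarith

lemma volume_swapSet {d : ℕ} {R : Set (Fin d → ℝ)} {γ : Fin d → ℝ} (hR : R ⊆ unitCube d)
    (hRm : MeasurableSet R) (hγ : ∃ i, 1 ≤ |γ i|) : volume (swapSet R γ) = 1 := by
  rw [swapSet, measure_union (swapSet_disjoint hR hγ) (shiftSet_measurable hRm γ), volume_shiftSet,
    ← measure_union Set.disjoint_sdiff_left hRm, Set.sdiff_union_of_subset hR, volume_unitCube]

/-- For `γ = q v + p`, the discrepancy of `swapSet R γ` telescopes to at most `2 |q|`. -/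
lemma isBRS_swapSet {d : ℕ} {v : Fin d → ℝ} {R : Set (Fin d → ℝ)} {γ : Fin d → ℝ}
    (hγv : γ ∈ lat v) (hR : R ⊆ unitCube d) (hRm : MeasurableSet R) (hγ : ∃ i, 1 ≤ |γ i|) :
    IsBRS v (swapSet R γ) := by
  obtain ⟨q, p, rfl⟩ := mem_lat.1 hγv
  refine ⟨2 * |((-q : ℤ) : ℝ)|, Filter.Eventually.of_forall fun x n _ => ?_⟩
  set f : ℤ → ℝ := fun k => multFn R (x + (k : ℝ) • v) with hf
  have hf1 : ∀ k, |f k| ≤ 1 := fun k => by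
    rw [abs_of_nonneg (multFn_nonneg _ _)]
    exact multFn_le_one hR _
  have hb := (unitCube_bounded d).subset hR
  have hmult : ∀ k : ℕ, multFn (swapSet R ((q : ℝ) • v + zvec p)) (x + (k : ℝ) • v) =
      1 - f k + f (k + -q) := fun k => by
    rw [swapSet, multFn_union ((unitCube_bounded d).subset Set.sdiff_subset)
      (shiftSet_bounded hb _) (swapSet_disjoint hR hγ), multFn_diff_unitCube hR, multFn_shiftSet,
      ← multFn_add_zvec R (_ - _) p]
    simp only [hf]
    congr 2
    push_cast
    module
  rw [disc, volume_swapSet hR hRm hγ, Finset.sum_congr rfl fun k _ => hmult k]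
  refine le_trans (le_of_eq ?_) (abs_shift_sum_le hf1 n (-q))
  rw [Finset.sum_add_distrib, Finset.sum_sub_distrib]
  simp
  congr 1
  ring

/-- If `Tγ ∉ ℤβ + ℤ^d`, disjoint sets inside the image of the unit cube with arbitrarily large
ergodic sums exist. By `uniform_bound`, some union of them has unbounded ergodic sums, and then
swapping its preimage `R` in the unit cube for `R + γ` gives a bounded remainder set for `α`
whose image is not one for `β`. The condition on the size of `γ` keeps `R + γ` off the cube. -/
lemma image_mem_lat {d : ℕ} (hd : 1 ≤ d) {α β : Fin d → ℝ}
    (T : (Fin d → ℝ) ≃ₗ[ℝ] (Fin d → ℝ))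
    (h : ∀ S : Set (Fin d → ℝ), Bornology.IsBounded S → MeasurableSet S →
      IsBRS α S → IsBRS β (T '' S)) {γ : Fin d → ℝ} (hγα : γ ∈ lat α) (hγ : ∃ i, 1 ≤ |γ i|) :
    T γ ∈ lat β := by
  by_contra hTγ
  -- disjoint open boxes inside the unit cube
  set V : ℕ → Set (Fin d → ℝ) := fun j =>
    Set.pi Set.univ fun _ => Set.Ioo (1 / ((j : ℝ) + 2)) (1 / ((j : ℝ) + 1)) with hV
  have hVlt : ∀ j : ℕ, 1 / ((j : ℝ) + 2) < 1 / ((j : ℝ) + 1) := fun j => by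
    apply one_div_lt_one_div_of_lt <;> [positivity; linarith]
  have hVo : ∀ j, IsOpen (V j) := fun j => isOpen_set_pi Set.finite_univ fun _ _ => isOpen_Ioo
  have hVne : ∀ j, (V j).Nonempty := fun j =>
    Set.univ_pi_nonempty_iff.2 fun _ => Set.nonempty_Ioo.2 (hVlt j)
  have hVQ : ∀ j, V j ⊆ unitCube d := fun j =>
    Set.pi_mono fun _ _ => by
      intro t ht
      have h1 : (0 : ℝ) < 1 / ((j : ℝ) + 2) := by positivity
      have h2 : 1 / ((j : ℝ) + 1) ≤ 1 := by
        rw [div_le_one (by positivity)]; linarith [(Nat.cast_nonneg j : (0 : ℝ) ≤ j)]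
      exact ⟨(h1.trans ht.1).le, ht.2.trans_le h2⟩
  have hVd' : ∀ i j, i < j → Disjoint (V i) (V j) := fun i j hij => by
    refine Set.disjoint_left.2 fun x hx hx' => ?_
    have h1 := (hx ⟨0, hd⟩ trivial).1
    have h2 := (hx' ⟨0, hd⟩ trivial).2
    have h3 : (i : ℝ) + 1 ≤ j := by exact_mod_cast hij
    have h4 : 1 / ((j : ℝ) + 1) ≤ 1 / ((i : ℝ) + 2) :=
      one_div_le_one_div_of_le (by positivity) (by linarith)
    linarith
  have hVd : ∀ i j, i ≠ j → Disjoint (V i) (V j) := fun i j hij => by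
    rcases lt_or_gt_of_ne hij with h | h
    · exact hVd' i j h
    · exact (hVd' j i h).symm
  have hTVo : ∀ j, IsOpen (T '' V j) := fun j => by
    rw [image_eq_preimage_symm']
    exact (hVo j).preimage (linearEquiv_continuous T.symm)
  have hTQb := image_bounded T (unitCube_bounded d)
  choose S hSV hSm n hn w r hr hlarge using fun j =>
    exists_large_shiftDisc hTγ (hTVo j) ((hVne j).image T)
      (hTQb.subset (Set.image_mono (hVQ j))) j
  have hSQ : ∀ j, S j ⊆ T '' unitCube d := fun j => (hSV j).trans (Set.image_mono (hVQ j))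
  have hSd : ∀ i j, i ≠ j → Disjoint (S i) (S j) := fun i j hij =>
    ((Set.disjoint_image_iff T.injective).2 (hVd i j hij)).mono (hSV i) (hSV j)
  have hbdd : ∀ ω, ∃ C : ℝ, ∀ᵐ x : Fin d → ℝ, ∀ n : ℕ, 1 ≤ n →
      |shiftDisc β (T γ) (selUnion S ω) n x| ≤ C := by
    intro ω
    set R := T.symm '' selUnion S ω with hR
    have hTR : T '' R = selUnion S ω := by
      rw [hR, Set.image_image]; simp
    have hsel : selUnion S ω ⊆ T '' unitCube d := fun x ⟨j, _, hx⟩ => hSQ j hx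
    have hRQ : R ⊆ unitCube d := by
      rw [← Set.image_subset_image_iff T.injective, hTR]
      exact hsel
    have hRm : MeasurableSet R := image_measurable _ (selUnion_measurable hSm ω)
    have hRb := (unitCube_bounded d).subset hRQ
    have hswb : Bornology.IsBounded (swapSet R γ) :=
      ((unitCube_bounded d).subset Set.sdiff_subset).union (shiftSet_bounded hRb _)
    have hswm : MeasurableSet (swapSet R γ) :=
      ((unitCube_measurable d).diff hRm).union (shiftSet_measurable hRm γ)
    obtain ⟨C1, h1⟩ := h _ hswb hswm (isBRS_swapSet hγα hRQ hRm hγ)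
    obtain ⟨C2, h2⟩ := h _ (unitCube_bounded d) (unitCube_measurable d) (isBRS_unitCube α)
    have hvol : volume (T '' swapSet R γ) = volume (T '' unitCube d) := by
      have e := fun s => Measure.addHaar_image_linearMap (volume : Measure (Fin d → ℝ))
        (T : (Fin d → ℝ) →ₗ[ℝ] (Fin d → ℝ)) s
      simp only [LinearEquiv.coe_coe] at e
      rw [e, e, volume_swapSet hRQ hRm hγ, volume_unitCube]
    have hsh : T '' shiftSet R γ = shiftSet (selUnion S ω) (T γ) := by
      ext x
      rw [image_eq_preimage_symm', ← hTR, image_eq_preimage_symm']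
      simp [shiftSet]
    have hmult : ∀ y, multFn (T '' swapSet R γ) y + multFn (selUnion S ω) y =
        multFn (T '' unitCube d) y + multFn (selUnion S ω) (y - T γ) := by
      intro y
      have hdj := (Set.disjoint_image_iff T.injective).2 (swapSet_disjoint hRQ hγ)
      have hdj' : Disjoint (T '' (unitCube d \ R)) (T '' R) :=
        (Set.disjoint_image_iff T.injective).2 Set.disjoint_sdiff_left
      have hb1 := image_bounded T ((unitCube_bounded d).subset (Set.sdiff_subset (t := R)))
      have e1 := multFn_union hb1 (image_bounded T (shiftSet_bounded hRb γ)) hdj y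
      have e2 := multFn_union hb1 (image_bounded T hRb) hdj' y
      rw [← Set.image_union, Set.sdiff_union_of_subset hRQ, hTR] at e2
      rw [← Set.image_union, hsh, multFn_shiftSet] at e1
      rw [swapSet, e1, e2]
      ring
    refine ⟨C2 + C1, ?_⟩
    filter_upwards [h1, h2] with x hx1 hx2 n hn
    have e : shiftDisc β (T γ) (selUnion S ω) n x =
        disc β (T '' unitCube d) n x - disc β (T '' swapSet R γ) n x := by
      rw [disc, disc, hvol, sub_sub_sub_cancel_right, ← Finset.sum_sub_distrib, shiftDisc]
      refine Finset.sum_congr rfl fun k _ => ?_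
      have := hmult (x + (k : ℝ) • β)
      have e3 : x + (k : ℝ) • β - T γ = x - T γ + (k : ℝ) • β := by abel
      rw [e3] at this
      linarith
    rw [e]
    exact (abs_sub _ _).trans (add_le_add (hx2 n hn) (hx1 n hn))
  obtain ⟨C, hC⟩ := uniform_bound β (T γ) hTQb hSQ hSd hbdd
  obtain ⟨M, hM⟩ := exists_nat_gt C
  obtain ⟨j, hj, hjM⟩ := (hC.and (Filter.eventually_ge_atTop M)).exists
  have hsub : Metric.ball (w j) (r j) ⊆
      {x | ¬ ∀ n : ℕ, 1 ≤ n → |shiftDisc β (T γ) (S j) n x| ≤ C} := by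
    intro x hx hcon
    have h1 := hlarge j x hx
    have h2 := (le_abs_self _).trans (hcon (n j) (hn j))
    have h3 : (M : ℝ) ≤ j := by exact_mod_cast hjM
    linarith
  have h0 := measure_mono_null hsub (ae_iff.1 hj)
  exact (Metric.measure_ball_pos volume (w j) (hr j)).ne' h0

lemma image_lat_subset {d : ℕ} (hd : 1 ≤ d) {α β : Fin d → ℝ}
    (T : (Fin d → ℝ) ≃ₗ[ℝ] (Fin d → ℝ))
    (h : ∀ S : Set (Fin d → ℝ), Bornology.IsBounded S → MeasurableSet S →
      IsBRS α S → IsBRS β (T '' S)) : T '' lat α ⊆ lat β := by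
  rintro _ ⟨γ, hγ, rfl⟩
  -- write `γ` as a difference of two vectors that both have a large coordinate
  obtain ⟨m, hm⟩ := exists_nat_gt (|γ ⟨0, hd⟩| + 1)
  set z : Fin d → ℝ := -zvec fun _ => (m : ℤ) with hz
  have hz0 : z ⟨0, hd⟩ = -(m : ℝ) := by simp [hz, zvec]
  have hzl : z ∈ lat α := mem_lat.2 ⟨0, -fun _ => (m : ℤ), by rw [zvec_neg]; simp [hz]⟩
  have hg := abs_nonneg (γ ⟨0, hd⟩)
  have h1 := image_mem_lat hd T h hzl ⟨⟨0, hd⟩, by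
    rw [hz0, abs_neg, Nat.abs_cast]; linarith⟩
  have h2 := image_mem_lat hd T h (lat_sub hγ hzl) ⟨⟨0, hd⟩, by
    rw [Pi.sub_apply, hz0, sub_neg_eq_add]
    refine le_trans ?_ (le_abs_self _)
    linarith [neg_abs_le (γ ⟨0, hd⟩)]⟩
  have hneg : (0 : Fin d → ℝ) - T z ∈ lat β :=
    lat_sub (mem_lat.2 ⟨0, 0, by ext i; simp [zvec]⟩) h1
  have := lat_sub h2 hneg
  rw [map_sub] at this
  convert this using 1
  abel

/-- `T(ℤα + ℤ^d) = ℤβ + ℤ^d` iff for every bounded measurable set `S`,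
`S` is a BRS w.r.t. `α` iff `T(S)` is a BRS w.r.t. `β`. -/
theorem stmt19 {d : ℕ} (hd : 1 ≤ d) (α β : Fin d → ℝ)
    (hα : IsIrrationalVector α) (hβ : IsIrrationalVector β)
    (T : (Fin d → ℝ) ≃ₗ[ℝ] (Fin d → ℝ)) :
    ⇑T '' lat α = lat β ↔
      ∀ S : Set (Fin d → ℝ), Bornology.IsBounded S → MeasurableSet S →
        (IsBRS α S ↔ IsBRS β (⇑T '' S)) := by
  have hsymm : ∀ S : Set (Fin d → ℝ), T.symm '' (T '' S) = S := fun S => by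
    rw [Set.image_image]; simp
  have hsymm' : ∀ S : Set (Fin d → ℝ), T '' (T.symm '' S) = S := fun S => by
    rw [Set.image_image]; simp
  constructor
  · intro hT S hS hm
    refine ⟨isBRS_image hd hα hβ T hT hS hm, fun h => ?_⟩
    have hT' : T.symm '' lat β = lat α := by rw [← hT, hsymm]
    have := isBRS_image hd hβ hα T.symm hT' (image_bounded T hS) (image_measurable T hm) h
    rwa [hsymm] at this
  · intro h
    refine Set.Subset.antisymm (image_lat_subset hd T fun S hS hm => (h S hS hm).1) ?_
    have := image_lat_subset (α := β) (β := α) hd T.symm fun S hS hm hB =>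
      (h _ (image_bounded T.symm hS) (image_measurable T.symm hm)).2 (by rwa [hsymm'])
    rw [← hsymm' (lat β)]
    exact Set.image_mono this
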